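/- arXiv:1003.3618 — 4 statements merged into one kernel-verified Lean document; each statement's English description precedes it below -/
import Mathlib

section
/- Let A and B be unital C*-algebras. Suppose that for every commutative C*-subalgebra C of A we are given a unital ★-algebra homomorphism f_C : C → B whose range consists of pairwise commuting elements, and that the family is compatible with inclusions: whenever C ⊆ D are commutative C*-subalgebras of A, the restriction of f_D to C equals f_C. Then there exists a unique function m from the set of normal elements of A to B such that m(a) = f_C(a) whenever a is a normal element of A belonging to some commutative C*-subalgebra C. Moreover m satisfies: m(1) = 1; m(a*) = m(a)*; m(z • a) = z • m(a) for all z ∈ ℂ; and whenever a, b are commuting normal elements of A, the elements m(a) and m(b) commute, m(a + b) = m(a) + m(b), and m(a · b) = m(a) · m(b). -/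
/-!
A single normal element generates a smallest closed commutative ★-subalgebra, so compatibility
forces all the `f C` to agree on it: this defines the mediating map and makes it unique. A pair of
normal elements commuting with each other and with each other's adjoints lies in a common closed
commutative ★-subalgebra `C`, on which the mediating map is the ★-homomorphism `f C`. In a
C*-algebra, Fuglede's theorem provides the commutation with adjoints.
-/

section

open StarAlgebra StarSubalgebra

variable {R A B : Type*} [CommSemiring R] [StarRing R] [TopologicalSpace A] [Semiring A]
  [StarRing A] [Algebra R A] [StarModule R A] [Semiring B] [Star B] [Algebra R B]

variable (R A B) in
/-- A choice of a ★-homomorphism to `B` on every closed commutative ★-subalgebra of `A`: the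
components of a cocone, with no compatibility required. -/
abbrev CommSubalgebraFamily : Type _ :=
  ∀ C : StarSubalgebra R A, IsClosed (C : Set A) →
    (∀ x ∈ C, ∀ y ∈ C, x * y = y * x) → (C →⋆ₐ[R] B)

/-- The cocone condition: the homomorphisms of the family restrict to each other along
inclusions. -/
def CommSubalgebraFamily.IsCompatible (f : CommSubalgebraFamily R A B) : Prop :=
  ∀ (C D : StarSubalgebra R A) (hC : IsClosed (C : Set A)) (hD : IsClosed (D : Set A))
    (hcC : ∀ x ∈ C, ∀ y ∈ C, x * y = y * x) (hcD : ∀ x ∈ D, ∀ y ∈ D, x * y = y * x)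
    (h : C ≤ D) (a : A) (ha : a ∈ C), f D hD hcD ⟨a, h ha⟩ = f C hC hcC ⟨a, ha⟩

/-- `m` is a mediating map for the family `f`: it agrees with every member of the family on the
normal elements where that member is defined. No algebraic property of `m` is required. -/
def CommSubalgebraFamily.IsMediating (f : CommSubalgebraFamily R A B)
    (m : {a : A // IsStarNormal a} → B) : Prop :=
  ∀ (C : StarSubalgebra R A) (hC : IsClosed (C : Set A)) (hc : ∀ x ∈ C, ∀ y ∈ C, x * y = y * x)
    (a : A) (ha : IsStarNormal a) (haC : a ∈ C), m ⟨a, ha⟩ = f C hC hc ⟨a, haC⟩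

variable [IsSemitopologicalSemiring A] [ContinuousStar A] [T2Space A]

theorem mul_comm_of_mem_topologicalClosure_adjoin {s : Set A}
    (hcomm : ∀ x ∈ s, ∀ y ∈ s, x * y = y * x)
    (hcomm_star : ∀ x ∈ s, ∀ y ∈ s, x * star y = star y * x) :
    ∀ x ∈ (adjoin R s).topologicalClosure, ∀ y ∈ (adjoin R s).topologicalClosure,
      x * y = y * x := by
  intro x hx y hy
  have := isMulCommutative_adjoin R hcomm hcomm_star
  let _ := (adjoin R s).commSemiringTopologicalClosure mul_comm'
  exact congrArg Subtype.val
    (mul_comm (⟨x, hx⟩ : (adjoin R s).topologicalClosure) ⟨y, hy⟩)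

theorem mul_comm_of_mem_elemental {a : A} (ha : IsStarNormal a) :
    ∀ x ∈ elemental R a, ∀ y ∈ elemental R a, x * y = y * x :=
  mul_comm_of_mem_topologicalClosure_adjoin (by simp) (by simpa using ha.star_comm_self.symm.eq)

variable (R) in
theorem exists_isClosed_comm_mem_mem {a b : A} (ha : IsStarNormal a) (hb : IsStarNormal b)
    (hab : Commute a b) (hab_star : Commute a (star b)) :
    ∃ C : StarSubalgebra R A, IsClosed (C : Set A) ∧ (∀ x ∈ C, ∀ y ∈ C, x * y = y * x) ∧
      a ∈ C ∧ b ∈ C := by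
  have hba_star : Commute b (star a) := by simpa using hab_star.symm.star_star
  have subset_closure : {a, b} ⊆ ((adjoin R {a, b}).topologicalClosure : Set A) :=
    (subset_adjoin R _).trans (le_topologicalClosure _)
  refine ⟨_, isClosed_topologicalClosure _, mul_comm_of_mem_topologicalClosure_adjoin ?_ ?_,
    subset_closure (by simp), subset_closure (by simp)⟩
  · rintro x (rfl | rfl) y (rfl | rfl)
    exacts [rfl, hab, hab.symm, rfl]
  · rintro x (rfl | rfl) y (rfl | rfl)
    exacts [ha.star_comm_self.symm, hab_star, hba_star, hb.star_comm_self.symm]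

namespace CommSubalgebraFamily

variable {f : CommSubalgebraFamily R A B}

theorem IsCompatible.exists_isMediating (hf : f.IsCompatible) : ∃ m, f.IsMediating m :=
  ⟨fun a => f (elemental R a.1) (elemental.isClosed R a.1) (mul_comm_of_mem_elemental a.2)
      ⟨a.1, elemental.self_mem R a.1⟩,
    fun C hC hc a _ haC =>
      (hf _ C _ hC _ hc (elemental.le_of_mem hC haC) a (elemental.self_mem R a)).symm⟩

namespace IsMediating

variable {m m' : {a : A // IsStarNormal a} → B}

theorem apply_eq_elemental (hm : f.IsMediating m) {a : A} (ha : IsStarNormal a) :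
    m ⟨a, ha⟩ = f (elemental R a) (elemental.isClosed R a) (mul_comm_of_mem_elemental ha)
      ⟨a, elemental.self_mem R a⟩ :=
  hm _ _ _ a ha _

theorem unique (hm : f.IsMediating m) (hm' : f.IsMediating m') : m = m' :=
  funext fun ⟨_, ha⟩ => (hm.apply_eq_elemental ha).trans (hm'.apply_eq_elemental ha).symm

protected theorem map_one (hm : f.IsMediating m) (h1 : IsStarNormal (1 : A)) : m ⟨1, h1⟩ = 1 :=
  (hm.apply_eq_elemental h1).trans (map_one (f (elemental R 1) _ _))

protected theorem map_star (hm : f.IsMediating m) {a : A} (ha : IsStarNormal a)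
    (ha' : IsStarNormal (star a)) : m ⟨star a, ha'⟩ = star (m ⟨a, ha⟩) := by
  rw [hm.apply_eq_elemental ha, ← map_star]
  exact hm _ _ _ _ ha' (elemental.star_self_mem R a)

protected theorem map_smul (hm : f.IsMediating m) (z : R) {a : A} (ha : IsStarNormal a)
    (hza : IsStarNormal (z • a)) : m ⟨z • a, hza⟩ = z • m ⟨a, ha⟩ := by
  rw [hm.apply_eq_elemental ha, ← map_smul]
  exact hm _ _ _ _ hza (SMulMemClass.smul_mem z (elemental.self_mem R a))

theorem commute (hm : f.IsMediating m) {a b : A} (ha : IsStarNormal a) (hb : IsStarNormal b)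
    (hab : Commute a b) (hab_star : Commute a (star b)) :
    Commute (m ⟨a, ha⟩) (m ⟨b, hb⟩) := by
  obtain ⟨C, hC, hc, haC, hbC⟩ := exists_isClosed_comm_mem_mem R ha hb hab hab_star
  have hab_C : Commute (⟨a, haC⟩ : C) ⟨b, hbC⟩ := Subtype.ext hab
  rw [hm C hC hc a ha haC, hm C hC hc b hb hbC]
  exact hab_C.map (f C hC hc)

protected theorem map_add (hm : f.IsMediating m) {a b : A} (ha : IsStarNormal a)
    (hb : IsStarNormal b) (hab : Commute a b) (hab_star : Commute a (star b))
    (hadd : IsStarNormal (a + b)) :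
    m ⟨a + b, hadd⟩ = m ⟨a, ha⟩ + m ⟨b, hb⟩ := by
  obtain ⟨C, hC, hc, haC, hbC⟩ := exists_isClosed_comm_mem_mem R ha hb hab hab_star
  rw [hm C hC hc a ha haC, hm C hC hc b hb hbC, ← map_add]
  exact hm C hC hc _ hadd (add_mem haC hbC)

protected theorem map_mul (hm : f.IsMediating m) {a b : A} (ha : IsStarNormal a)
    (hb : IsStarNormal b) (hab : Commute a b) (hab_star : Commute a (star b))
    (hmul : IsStarNormal (a * b)) :
    m ⟨a * b, hmul⟩ = m ⟨a, ha⟩ * m ⟨b, hb⟩ := by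
  obtain ⟨C, hC, hc, haC, hbC⟩ := exists_isClosed_comm_mem_mem R ha hb hab hab_star
  rw [hm C hC hc a ha haC, hm C hC hc b hb hbC, ← map_mul]
  exact hm C hC hc _ hmul (mul_mem haC hbC)

end IsMediating

end CommSubalgebraFamily

end

theorem partial_cstar_colimit_general
    {R A B : Type*} [CommSemiring R] [StarRing R]
    [TopologicalSpace A] [T2Space A] [Semiring A] [StarRing A] [IsSemitopologicalSemiring A]
    [ContinuousStar A] [Algebra R A] [StarModule R A]
    [Semiring B] [Star B] [Algebra R B]
    (f : CommSubalgebraFamily R A B) (hf : f.IsCompatible) :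
    ∃ m : {a : A // IsStarNormal a} → B,
      f.IsMediating m ∧
      (∀ m', f.IsMediating m' → m' = m) ∧
      (∀ h1 : IsStarNormal (1 : A), m ⟨1, h1⟩ = 1) ∧
      (∀ (a : A) (ha : IsStarNormal a) (ha' : IsStarNormal (star a)),
        m ⟨star a, ha'⟩ = star (m ⟨a, ha⟩)) ∧
      (∀ (z : R) (a : A) (ha : IsStarNormal a) (hza : IsStarNormal (z • a)),
        m ⟨z • a, hza⟩ = z • m ⟨a, ha⟩) ∧
      (∀ (a b : A) (ha : IsStarNormal a) (hb : IsStarNormal b),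
        Commute a b → Commute a (star b) →
        ∀ (hab : IsStarNormal (a + b)) (hmul : IsStarNormal (a * b)),
          Commute (m ⟨a, ha⟩) (m ⟨b, hb⟩) ∧
          m ⟨a + b, hab⟩ = m ⟨a, ha⟩ + m ⟨b, hb⟩ ∧
          m ⟨a * b, hmul⟩ = m ⟨a, ha⟩ * m ⟨b, hb⟩) := by
  obtain ⟨m, hm⟩ := hf.exists_isMediating
  exact ⟨m, hm, fun _ hm' => hm'.unique hm, hm.map_one, fun _ => hm.map_star,
    fun z _ => hm.map_smul z, fun _ _ ha hb hab hab_star hadd hmul =>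
      ⟨hm.commute ha hb hab hab_star, hm.map_add ha hb hab hab_star hadd,
        hm.map_mul ha hb hab hab_star hmul⟩⟩

/-- **Colimit property of a C*-algebra over its commutative C*-subalgebras.**
Given a compatible family of unital ★-algebra homomorphisms `f C : C → B`, defined on all
commutative C*-subalgebras `C` of `A` (topologically closed unital ★-subalgebras with pairwise
commuting elements), with pairwise commuting ranges, there is a unique mediating function `m`
on the normal elements of `A`, and it enjoys the listed algebraic properties. -/
theorem partial_cstar_colimit
    {A : Type*} [NormedRing A] [StarRing A] [CStarRing A] [CompleteSpace A]
    [NormedAlgebra ℂ A] [StarModule ℂ A]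
    {B : Type*} [NormedRing B] [StarRing B] [CStarRing B] [CompleteSpace B]
    [NormedAlgebra ℂ B] [StarModule ℂ B]
    (f : ∀ C : StarSubalgebra ℂ A, IsClosed (C : Set A) →
      (∀ x ∈ C, ∀ y ∈ C, x * y = y * x) → (↥C →⋆ₐ[ℂ] B))
    (hcomm : ∀ (C : StarSubalgebra ℂ A) (hC : IsClosed (C : Set A))
      (hc : ∀ x ∈ C, ∀ y ∈ C, x * y = y * x) (x y : ↥C),
      f C hC hc x * f C hC hc y = f C hC hc y * f C hC hc x)
    (hcompat : ∀ (C D : StarSubalgebra ℂ A) (hC : IsClosed (C : Set A))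
      (hD : IsClosed (D : Set A)) (hcC : ∀ x ∈ C, ∀ y ∈ C, x * y = y * x)
      (hcD : ∀ x ∈ D, ∀ y ∈ D, x * y = y * x) (h : C ≤ D) (a : A) (ha : a ∈ C),
      f D hD hcD ⟨a, h ha⟩ = f C hC hcC ⟨a, ha⟩) :
    ∃ m : {a : A // IsStarNormal a} → B,
      (∀ (C : StarSubalgebra ℂ A) (hC : IsClosed (C : Set A))
        (hc : ∀ x ∈ C, ∀ y ∈ C, x * y = y * x) (a : A) (ha : IsStarNormal a) (haC : a ∈ C),
        m ⟨a, ha⟩ = f C hC hc ⟨a, haC⟩) ∧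
      (∀ m' : {a : A // IsStarNormal a} → B,
        (∀ (C : StarSubalgebra ℂ A) (hC : IsClosed (C : Set A))
          (hc : ∀ x ∈ C, ∀ y ∈ C, x * y = y * x) (a : A) (ha : IsStarNormal a) (haC : a ∈ C),
          m' ⟨a, ha⟩ = f C hC hc ⟨a, haC⟩) → m' = m) ∧
      (∀ h1 : IsStarNormal (1 : A), m ⟨1, h1⟩ = 1) ∧
      (∀ (a : A) (ha : IsStarNormal a) (ha' : IsStarNormal (star a)),
        m ⟨star a, ha'⟩ = star (m ⟨a, ha⟩)) ∧
      (∀ (z : ℂ) (a : A) (ha : IsStarNormal a) (hza : IsStarNormal (z • a)),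
        m ⟨z • a, hza⟩ = z • m ⟨a, ha⟩) ∧
      (∀ (a b : A) (ha : IsStarNormal a) (hb : IsStarNormal b), a * b = b * a →
        ∀ (hab : IsStarNormal (a + b)) (hmul : IsStarNormal (a * b)),
          m ⟨a, ha⟩ * m ⟨b, hb⟩ = m ⟨b, hb⟩ * m ⟨a, ha⟩ ∧
          m ⟨a + b, hab⟩ = m ⟨a, ha⟩ + m ⟨b, hb⟩ ∧
          m ⟨a * b, hmul⟩ = m ⟨a, ha⟩ * m ⟨b, hb⟩) := by
  let _ : CStarAlgebra A := {}
  obtain ⟨m, hm, huniq, hone, hstar, hsmul, hpair⟩ := partial_cstar_colimit_general f hcompat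
  exact ⟨m, hm, huniq, hone, hstar, hsmul,
    fun a b ha hb hab => hpair a b ha hb hab (hb.commute_star_right hab)⟩
end

section
/- Let A be a unital C*-algebra over ℂ and let S ⊆ A. Then the topological closure of the unital ★-subalgebra of A generated by S has pairwise commuting elements if and only if every element of S is normal and the elements of S pairwise commute. -/
/-!
Commutativity passes between a set and its closure, because centralizers in a Hausdorff space are
closed, and between a ★-subalgebra and its generators together with their adjoints. What remains is
to replace the relations `a * star b = star b * a` on the generators by normality alone, which is
Fuglede's theorem.
-/

theorem centralizer_closure_eq {M : Type*} [Mul M] [TopologicalSpace M]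
    [SeparatelyContinuousMul M] [T2Space M] (s : Set M) :
    (closure s).centralizer = s.centralizer := by
  refine (Set.centralizer_subset subset_closure).antisymm fun x hx ↦ ?_
  have hs : s ⊆ Set.centralizer {x} := by
    rintro y hy _ rfl
    exact (hx y hy).symm
  have hclosure : closure s ⊆ Set.centralizer {x} :=
    closure_minimal hs (Set.isClosed_centralizer _)
  exact fun y hy ↦ (hclosure hy x rfl).symm

theorem closure_subset_centralizer_closure_iff {M : Type*} [Mul M] [TopologicalSpace M]
    [SeparatelyContinuousMul M] [T2Space M] {s : Set M} :
    closure s ⊆ (closure s).centralizer ↔ s ⊆ s.centralizer := by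
  rw [centralizer_closure_eq, (Set.isClosed_centralizer s).closure_subset_iff]

theorem isMulCommutative_iff_subset_centralizer {S M : Type*} [SetLike S M] [Mul M]
    [MulMemClass S M] {B : S} :
    IsMulCommutative B ↔ (B : Set M) ⊆ (B : Set M).centralizer :=
  isMulCommutative_iff_of_setLike.trans
    ⟨fun h x hx y hy ↦ h y hy x hx, fun h _ hx _ hy ↦ h hy _ hx⟩

theorem isMulCommutative_topologicalClosure_iff {R A : Type*} [CommSemiring R] [StarRing R]
    [TopologicalSpace A] [Semiring A] [StarRing A] [IsSemitopologicalSemiring A]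
    [ContinuousStar A] [T2Space A] [Algebra R A] [StarModule R A] {B : StarSubalgebra R A} :
    IsMulCommutative B.topologicalClosure ↔ IsMulCommutative B := by
  simp only [isMulCommutative_iff_subset_centralizer, StarSubalgebra.topologicalClosure_coe,
    closure_subset_centralizer_closure_iff]

theorem isMulCommutative_adjoin_iff {R A : Type*} [CommSemiring R] [StarRing R] [Semiring A]
    [StarRing A] [Algebra R A] [StarModule R A] {s : Set A} :
    IsMulCommutative (StarAlgebra.adjoin R s) ↔
      (∀ a ∈ s, ∀ b ∈ s, a * star b = star b * a) ∧ (∀ a ∈ s, ∀ b ∈ s, a * b = b * a) := by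
  refine ⟨fun _ ↦ ?_, fun ⟨hstar, hcomm⟩ ↦ StarAlgebra.isMulCommutative_adjoin R hcomm hstar⟩
  have mem_adjoin {a : A} (ha : a ∈ s) : a ∈ StarAlgebra.adjoin R s :=
    StarAlgebra.mem_adjoin_of_mem R ha
  exact ⟨fun a ha b hb ↦ setLike_mul_comm (mem_adjoin ha) (star_mem (mem_adjoin hb)),
    fun a ha b hb ↦ setLike_mul_comm (mem_adjoin ha) (mem_adjoin hb)⟩

theorem forall_mul_star_comm_iff_forall_isStarNormal {A : Type*} [NonUnitalCStarAlgebra A]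
    {s : Set A} (hcomm : ∀ a ∈ s, ∀ b ∈ s, a * b = b * a) :
    (∀ a ∈ s, ∀ b ∈ s, a * star b = star b * a) ↔ ∀ a ∈ s, IsStarNormal a := by
  constructor
  · exact fun hstar a ha ↦ ⟨(hstar a ha a ha).symm⟩
  · intro hnormal a ha b hb
    exact (hnormal b hb).commute_star_right (hcomm a ha b hb)

/-- The topological closure of the unital ★-subalgebra generated by a set `S` in a unital
C*-algebra is commutative if and only if the elements of `S` are normal and pairwise commute. -/
theorem closure_adjoin_comm_iff
    {A : Type*} [NormedRing A] [StarRing A] [CStarRing A] [CompleteSpace A]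
    [NormedAlgebra ℂ A] [StarModule ℂ A] (S : Set A) :
    (∀ x ∈ (StarAlgebra.adjoin ℂ S).topologicalClosure,
      ∀ y ∈ (StarAlgebra.adjoin ℂ S).topologicalClosure, x * y = y * x) ↔
    (∀ a ∈ S, IsStarNormal a) ∧ (∀ a ∈ S, ∀ b ∈ S, a * b = b * a) := by
  let : CStarAlgebra A := {}
  rw [← isMulCommutative_iff_of_setLike, isMulCommutative_topologicalClosure_iff,
    isMulCommutative_adjoin_iff]
  exact and_congr_left forall_mul_star_comm_iff_forall_isStarNormal
end

section
/- Let A be a unital C*-algebra over ℂ, and let 𝒞(A) be the set of commutative C*-subalgebras of A partially ordered by inclusion. Then 𝒞(A) is directed (every two elements of 𝒞(A) have a common upper bound in 𝒞(A)) if and only if A is commutative. Moreover, if A is commutative then A itself is the greatest element of 𝒞(A). -/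
/-!
If `a` is normal, then `{a, star a}` is a commuting set, so its bicommutant is a commutative
star subalgebra containing `a`; it is closed because every commutant in a Hausdorff algebra is.
An upper bound of the bicommutants of two normal elements is a commutative algebra containing both,
so if the closed commutative star subalgebras are directed, any two normal elements commute.
Over `ℂ` the self-adjoint elements span, hence all elements commute.
-/

/-- The set `𝒞(A)` of closed commutative star subalgebras of a topological star algebra `A`; for a
unital C⋆-algebra over `ℂ` these are its commutative C⋆-subalgebras. The order is the inclusion
order of `StarSubalgebra R A`. -/
def closedCommStarSubalgebras (R A : Type*) [CommSemiring R] [StarRing R] [Semiring A] [StarRing A]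
    [Algebra R A] [StarModule R A] [TopologicalSpace A] : Set (StarSubalgebra R A) :=
  {C | IsClosed (C : Set A) ∧ ∀ x ∈ C, ∀ y ∈ C, x * y = y * x}

namespace closedCommStarSubalgebras

open StarSubalgebra

variable {R A : Type*} [CommSemiring R] [StarRing R] [Semiring A] [StarRing A]
  [Algebra R A] [StarModule R A] [TopologicalSpace A]

theorem mem_iff {C : StarSubalgebra R A} : C ∈ closedCommStarSubalgebras R A ↔
    IsClosed (C : Set A) ∧ ∀ x ∈ C, ∀ y ∈ C, x * y = y * x :=
  Iff.rfl

theorem directedOn_iff :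
    DirectedOn (· ≤ ·) (closedCommStarSubalgebras R A) ↔
      ∀ C C' : StarSubalgebra R A,
        IsClosed (C : Set A) → (∀ x ∈ C, ∀ y ∈ C, x * y = y * x) →
        IsClosed (C' : Set A) → (∀ x ∈ C', ∀ y ∈ C', x * y = y * x) →
        ∃ C'' : StarSubalgebra R A, IsClosed (C'' : Set A) ∧
          (∀ x ∈ C'', ∀ y ∈ C'', x * y = y * x) ∧ C ≤ C'' ∧ C' ≤ C'' := by
  simp only [DirectedOn, mem_iff, and_imp, and_assoc]
  exact ⟨fun h C C' hC hCcomm ↦ h C hC hCcomm C', fun h C hC hCcomm C' ↦ h C C' hC hCcomm⟩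

theorem isGreatest_top (hcomm : ∀ x y : A, x * y = y * x) :
    IsGreatest (closedCommStarSubalgebras R A) ⊤ :=
  ⟨⟨isClosed_univ, fun x _ y _ ↦ hcomm x y⟩, fun _ _ ↦ le_top⟩

variable [SeparatelyContinuousMul A] [T2Space A]

variable (R) in
theorem centralizer_centralizer_singleton_mem (a : A) [IsStarNormal a] :
    centralizer R (centralizer R {a} : Set A) ∈ closedCommStarSubalgebras R A := by
  have hcomm : ∀ x ∈ ({a} ∪ star {a} : Set A), ∀ y ∈ ({a} ∪ star {a} : Set A), y * x = x * y :=
    Set.union_star_self_comm (by simp) (by simp [star_comm_self' a])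
  refine ⟨Set.isClosed_centralizer _, ?_⟩
  simp only [← SetLike.mem_coe, coe_centralizer_centralizer]
  exact Set.centralizer_centralizer_comm_of_comm fun x hx y hy ↦ hcomm y hy x hx

theorem commute_of_directedOn (hdir : DirectedOn (· ≤ ·) (closedCommStarSubalgebras R A))
    (a b : A) [IsStarNormal a] [IsStarNormal b] : Commute a b := by
  have self_mem_bicommutant (c : A) : c ∈ centralizer R (centralizer R {c} : Set A) :=
    StarAlgebra.adjoin_le_centralizer_centralizer R {c} (StarAlgebra.self_mem_adjoin_singleton R c)
  obtain ⟨C, ⟨-, hcomm⟩, ha, hb⟩ :=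
    hdir _ (centralizer_centralizer_singleton_mem R a) _ (centralizer_centralizer_singleton_mem R b)
  exact hcomm a (ha (self_mem_bicommutant a)) b (hb (self_mem_bicommutant b))

end closedCommStarSubalgebras

theorem commute_of_forall_selfAdjoint_commute {A : Type*} [NonUnitalNonAssocRing A] [StarRing A]
    [Module ℂ A] [StarModule ℂ A] [IsScalarTower ℂ A A] [SMulCommClass ℂ A A]
    (hsa : ∀ a b : selfAdjoint A, Commute (a : A) b) (x y : A) : Commute x y := by
  have commute_selfAdjoint (a : selfAdjoint A) (z : A) : Commute (a : A) z := by
    rw [← realPart_add_I_smul_imaginaryPart z]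
    exact (hsa a _).add_right ((hsa a _).smul_right _)
  rw [← realPart_add_I_smul_imaginaryPart x]
  exact (commute_selfAdjoint _ y).add_left ((commute_selfAdjoint _ y).smul_left _)

theorem commCStarSubalgebras_directed_iff_comm_general {A : Type*} [Ring A] [StarRing A]
    [Algebra ℂ A] [StarModule ℂ A] [TopologicalSpace A] [SeparatelyContinuousMul A] [T2Space A] :
    (DirectedOn (· ≤ ·) (closedCommStarSubalgebras ℂ A) ↔ ∀ x y : A, x * y = y * x) ∧
      ((∀ x y : A, x * y = y * x) → IsGreatest (closedCommStarSubalgebras ℂ A) ⊤) := by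
  refine ⟨⟨fun hdir ↦ commute_of_forall_selfAdjoint_commute fun a b ↦ ?_, fun hcomm ↦ ?_⟩,
    closedCommStarSubalgebras.isGreatest_top⟩
  · have := a.2.isStarNormal
    have := b.2.isStarNormal
    exact closedCommStarSubalgebras.commute_of_directedOn hdir a b
  · exact (closedCommStarSubalgebras.isGreatest_top hcomm).directedOn

/-- The poset `𝒞(A)` of commutative C*-subalgebras of a unital C*-algebra `A` (topologically
closed unital ★-subalgebras with pairwise commuting elements, ordered by inclusion) is directed
if and only if `A` is commutative; in that case `A` itself (i.e. `⊤`) is the greatest element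
of `𝒞(A)`. -/
theorem commCStarSubalgebras_directed_iff_comm
    {A : Type*} [NormedRing A] [StarRing A] [CStarRing A] [CompleteSpace A]
    [NormedAlgebra ℂ A] [StarModule ℂ A] :
    ((∀ C C' : StarSubalgebra ℂ A,
        IsClosed (C : Set A) → (∀ x ∈ C, ∀ y ∈ C, x * y = y * x) →
        IsClosed (C' : Set A) → (∀ x ∈ C', ∀ y ∈ C', x * y = y * x) →
        ∃ C'' : StarSubalgebra ℂ A, IsClosed (C'' : Set A) ∧
          (∀ x ∈ C'', ∀ y ∈ C'', x * y = y * x) ∧ C ≤ C'' ∧ C' ≤ C'') ↔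
      (∀ x y : A, x * y = y * x)) ∧
    ((∀ x y : A, x * y = y * x) →
      IsClosed ((⊤ : StarSubalgebra ℂ A) : Set A) ∧
      (∀ x ∈ (⊤ : StarSubalgebra ℂ A), ∀ y ∈ (⊤ : StarSubalgebra ℂ A), x * y = y * x) ∧
      (∀ C : StarSubalgebra ℂ A, IsClosed (C : Set A) →
        (∀ x ∈ C, ∀ y ∈ C, x * y = y * x) → C ≤ (⊤ : StarSubalgebra ℂ A))) := by
  simpa only [closedCommStarSubalgebras.directedOn_iff, IsGreatest, mem_upperBounds,
    closedCommStarSubalgebras.mem_iff, and_imp, and_assoc] using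
    commCStarSubalgebras_directed_iff_comm_general (A := A)
end

section
/- Let A be a unital C*-algebra over ℂ, and let L be a Boolean algebra. Suppose that for every commutative C*-subalgebra C of A we are given a map g_C from the set of projections of C to L satisfying g_C(0) = ⊥, g_C(1) = ⊤, g_C(1 − p) = (g_C p)ᶜ, g_C(p·q) = g_C p ⊓ g_C q and g_C(p + q − p·q) = g_C p ⊔ g_C q for all projections p, q ∈ C, and that the family is compatible: if C ⊆ D then g_D agrees with g_C on projections of C. Then there exists a unique map m from the set of all projections of A to L such that m(p) = g_C(p) whenever the projection p lies in a commutative C*-subalgebra C; moreover m(0) = ⊥, m(1) = ⊤, m(1 − p) = (m p)ᶜ, and m(p·q) = m p ⊓ m q and m(p + q − p·q) = m p ⊔ m q for all commuting projections p, q of A. -/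
/-!
The value of `m` at a projection `p` is forced to be `g C p` for any commutative C*-subalgebra `C`
containing `p`. Such a `C` exists, namely the bicommutant of `p`, and the value does not depend on
it, since `g C` and `g D` both restrict to `g (C ⊓ D)`. Two commuting projections lie together in
the bicommutant of the pair, so `m` inherits every Boolean identity from a single `g C`.
-/

section Semiring

variable {R A : Type*} [CommSemiring R] [StarRing R] [TopologicalSpace A] [T2Space A]
  [Semiring A] [StarRing A] [SeparatelyContinuousMul A] [Algebra R A] [StarModule R A]

variable (R) in
theorem exists_isClosed_commutative_starSubalgebra_subset {s : Set A}
    (hcomm : ∀ a ∈ s, ∀ b ∈ s, a * b = b * a)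
    (hstar : ∀ a ∈ s, ∀ b ∈ s, a * star b = star b * a) :
    ∃ C : StarSubalgebra R A, IsClosed (C : Set A) ∧ (∀ x ∈ C, ∀ y ∈ C, x * y = y * x) ∧
      s ⊆ C := by
  let C := StarSubalgebra.centralizer R (StarSubalgebra.centralizer R s : Set A)
  have hsC : s ⊆ C :=
    (StarAlgebra.subset_adjoin R s).trans (StarAlgebra.adjoin_le_centralizer_centralizer R s)
  have hcomm_union : ∀ a ∈ s ∪ star s, ∀ b ∈ s ∪ star s, a * b = b * a :=
    fun a ha b hb => Set.union_star_self_comm (fun x hx y hy => hcomm y hy x hx)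
      (fun x hx y hy => hstar y hy x hx) b hb a ha
  refine ⟨C, Set.isClosed_centralizer _, fun x hx y hy => ?_, hsC⟩
  rw [← SetLike.mem_coe, StarSubalgebra.coe_centralizer_centralizer] at hx hy
  exact Set.centralizer_centralizer_comm_of_comm hcomm_union x hx y hy

variable (R) in
theorem exists_isClosed_commutative_starSubalgebra_of_commute {p q : A} (hp : IsSelfAdjoint p)
    (hq : IsSelfAdjoint q) (hpq : Commute p q) :
    ∃ C : StarSubalgebra R A, IsClosed (C : Set A) ∧ (∀ x ∈ C, ∀ y ∈ C, x * y = y * x) ∧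
      p ∈ C ∧ q ∈ C := by
  have hcomm : ∀ a ∈ ({p, q} : Set A), ∀ b ∈ ({p, q} : Set A), a * b = b * a := by
    rintro a (rfl | rfl) b (rfl | rfl)
    exacts [rfl, hpq, hpq.symm, rfl]
  have hself : ∀ b ∈ ({p, q} : Set A), star b = b := by
    rintro b (rfl | rfl)
    exacts [hp, hq]
  obtain ⟨C, hC, hc, hsub⟩ := exists_isClosed_commutative_starSubalgebra_subset R hcomm
    fun a ha b hb => by rw [hself b hb]; exact hcomm a ha b hb
  exact ⟨C, hC, hc, hsub (.inl rfl), hsub (.inr rfl)⟩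

theorem existsUnique_value_of_compatible {L : Type*} {p : A} (hp : IsStarNormal p)
    (f : ∀ C : StarSubalgebra R A, IsClosed (C : Set A) →
      (∀ x ∈ C, ∀ y ∈ C, x * y = y * x) → p ∈ C → L)
    (f_compat : ∀ C D hC hD hcC hcD, C ≤ D → ∀ hpC hpD, f D hD hcD hpD = f C hC hcC hpC) :
    ∃! v : L, ∀ C hC hc hpC, v = f C hC hc hpC := by
  obtain ⟨C, hC, hc, hsub⟩ :=
    exists_isClosed_commutative_starSubalgebra_subset R (s := {p})
      (by rintro _ rfl _ rfl; rfl) (by rintro _ rfl _ rfl; exact hp.star_comm_self.symm)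
  have hpC : p ∈ C := hsub rfl
  refine ⟨f C hC hc hpC, fun D hD hcD hpD => ?_, fun v hv => hv C hC hc hpC⟩
  have hCD : IsClosed ((C ⊓ D : StarSubalgebra R A) : Set A) := hC.inter hD
  have hcCD : ∀ x ∈ C ⊓ D, ∀ y ∈ C ⊓ D, x * y = y * x := fun x hx y hy => hc x hx.1 y hy.1
  calc f C hC hc hpC = f (C ⊓ D) hCD hcCD ⟨hpC, hpD⟩ := f_compat _ _ _ _ _ _ inf_le_left _ _
    _ = f D hD hcD hpD := (f_compat _ _ _ _ _ _ inf_le_right _ _).symm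

end Semiring

theorem projections_colimit_general
    {R A : Type*} [CommRing R] [StarRing R] [TopologicalSpace A] [T2Space A]
    [Ring A] [StarRing A] [SeparatelyContinuousMul A] [Algebra R A] [StarModule R A]
    {L : Type*} [Bot L] [Top L] [Compl L] [Min L] [Max L]
    (g : ∀ C : StarSubalgebra R A, IsClosed (C : Set A) →
      (∀ x ∈ C, ∀ y ∈ C, x * y = y * x) →
      ∀ p : A, p ∈ C → star p = p → p * p = p → L)
    (g_bot : ∀ C hC hc h0 hs hi, g C hC hc 0 h0 hs hi = ⊥)
    (g_top : ∀ C hC hc h1 hs hi, g C hC hc 1 h1 hs hi = ⊤)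
    (g_compl : ∀ C hC hc p hp hps hpi hp' hps' hpi',
      g C hC hc (1 - p) hp' hps' hpi' = (g C hC hc p hp hps hpi)ᶜ)
    (g_inf : ∀ C hC hc p q hp hps hpi hq hqs hqi hpq hpqs hpqi,
      g C hC hc (p * q) hpq hpqs hpqi = g C hC hc p hp hps hpi ⊓ g C hC hc q hq hqs hqi)
    (g_sup : ∀ C hC hc p q hp hps hpi hq hqs hqi hpq hpqs hpqi,
      g C hC hc (p + q - p * q) hpq hpqs hpqi
        = g C hC hc p hp hps hpi ⊔ g C hC hc q hq hqs hqi)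
    (g_compat : ∀ C D hC hD hcC hcD, C ≤ D → ∀ p hp hpD hps hpi,
      g D hD hcD p hpD hps hpi = g C hC hcC p hp hps hpi) :
    ∃ m : ∀ p : A, star p = p → p * p = p → L,
      (∀ C hC hc p hp hps hpi, m p hps hpi = g C hC hc p hp hps hpi) ∧
      (∀ m' : ∀ p : A, star p = p → p * p = p → L,
        (∀ C hC hc p hp hps hpi, m' p hps hpi = g C hC hc p hp hps hpi) → m' = m) ∧
      (∀ hs hi, m 0 hs hi = ⊥) ∧
      (∀ hs hi, m 1 hs hi = ⊤) ∧
      (∀ p hps hpi hs' hi', m (1 - p) hs' hi' = (m p hps hpi)ᶜ) ∧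
      (∀ p q hps hpi hqs hqi, p * q = q * p →
        (∀ hs hi, m (p * q) hs hi = m p hps hpi ⊓ m q hqs hqi) ∧
        (∀ hs hi, m (p + q - p * q) hs hi = m p hps hpi ⊔ m q hqs hqi)) := by
  choose m hm m_unique using fun (p : A) (hs : star p = p) (hi : p * p = p) =>
    existsUnique_value_of_compatible (IsSelfAdjoint.isStarNormal hs)
      (fun C hC hc hp => g C hC hc p hp hs hi)
      (fun C D hC hD hcC hcD hCD hpC hpD =>
        g_compat C D hC hD hcC hcD hCD p hpC hpD hs hi)
  have m_eq : ∀ C hC hc p hp hps hpi, m p hps hpi = g C hC hc p hp hps hpi :=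
    fun C hC hc p hp hps hpi => hm p hps hpi C hC hc hp
  obtain ⟨B, hB, hcB, h0B, h1B⟩ := exists_isClosed_commutative_starSubalgebra_of_commute R
    (IsSelfAdjoint.zero A) (IsSelfAdjoint.one A) (Commute.zero_left 1)
  refine ⟨m, m_eq, ?_, ?_, ?_, ?_, ?_⟩
  · intro m' m'_eq
    funext p hs hi
    exact m_unique p hs hi _ fun C hC hc hp => m'_eq C hC hc p hp hs hi
  · intro hs hi
    rw [m_eq B hB hcB 0 h0B, g_bot]
  · intro hs hi
    rw [m_eq B hB hcB 1 h1B, g_top]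
  · intro p hps hpi hs' hi'
    obtain ⟨C, hC, hc, hp, -⟩ :=
      exists_isClosed_commutative_starSubalgebra_of_commute R hps hps (.refl p)
    rw [m_eq C hC hc (1 - p) (sub_mem (one_mem C) hp), g_compl C hC hc p hp hps hpi,
      m_eq C hC hc p hp]
  · intro p q hps hpi hqs hqi hpq
    obtain ⟨C, hC, hc, hp, hq⟩ :=
      exists_isClosed_commutative_starSubalgebra_of_commute R hps hqs hpq
    rw [m_eq C hC hc p hp, m_eq C hC hc q hq]
    refine ⟨fun hs hi => ?_, fun hs hi => ?_⟩
    · rw [m_eq C hC hc (p * q) (mul_mem hp hq)]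
      exact g_inf C hC hc p q hp hps hpi hq hqs hqi _ _ _
    · rw [m_eq C hC hc (p + q - p * q) (sub_mem (add_mem hp hq) (mul_mem hp hq))]
      exact g_sup C hC hc p q hp hps hpi hq hqs hqi _ _ _

/-- **Colimit property of the partial Boolean algebra of projections of a C*-algebra.**
Given a compatible family of Boolean-operation-preserving maps `g C` from the projections of
each commutative C*-subalgebra `C` of `A` into a Boolean algebra `L`, there is a unique map `m`
from the projections of `A` to `L` agreeing with each `g C`, and `m` preserves `⊥`, `⊤`,
complement, and meets and joins of commuting projections. -/
theorem projections_colimit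
    {A : Type*} [NormedRing A] [StarRing A] [CStarRing A] [CompleteSpace A]
    [NormedAlgebra ℂ A] [StarModule ℂ A]
    {L : Type*} [BooleanAlgebra L]
    (g : ∀ C : StarSubalgebra ℂ A, IsClosed (C : Set A) →
      (∀ x ∈ C, ∀ y ∈ C, x * y = y * x) →
      ∀ p : A, p ∈ C → star p = p → p * p = p → L)
    (g_bot : ∀ C hC hc h0 hs hi, g C hC hc 0 h0 hs hi = ⊥)
    (g_top : ∀ C hC hc h1 hs hi, g C hC hc 1 h1 hs hi = ⊤)
    (g_compl : ∀ C hC hc (p : A) (hp : p ∈ C) (hps : star p = p) (hpi : p * p = p)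
      (hp' : (1 : A) - p ∈ C) (hps' : star ((1 : A) - p) = 1 - p)
      (hpi' : ((1 : A) - p) * (1 - p) = 1 - p),
      g C hC hc (1 - p) hp' hps' hpi' = (g C hC hc p hp hps hpi)ᶜ)
    (g_inf : ∀ C hC hc (p q : A) (hp : p ∈ C) (hps : star p = p) (hpi : p * p = p)
      (hq : q ∈ C) (hqs : star q = q) (hqi : q * q = q)
      (hpq : p * q ∈ C) (hpqs : star (p * q) = p * q) (hpqi : (p * q) * (p * q) = p * q),
      g C hC hc (p * q) hpq hpqs hpqi = g C hC hc p hp hps hpi ⊓ g C hC hc q hq hqs hqi)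
    (g_sup : ∀ C hC hc (p q : A) (hp : p ∈ C) (hps : star p = p) (hpi : p * p = p)
      (hq : q ∈ C) (hqs : star q = q) (hqi : q * q = q)
      (hpq : p + q - p * q ∈ C) (hpqs : star (p + q - p * q) = p + q - p * q)
      (hpqi : (p + q - p * q) * (p + q - p * q) = p + q - p * q),
      g C hC hc (p + q - p * q) hpq hpqs hpqi
        = g C hC hc p hp hps hpi ⊔ g C hC hc q hq hqs hqi)
    (g_compat : ∀ C D hC hD hcC hcD, C ≤ D → ∀ (p : A) (hp : p ∈ C) (hpD : p ∈ D)
      (hps : star p = p) (hpi : p * p = p),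
      g D hD hcD p hpD hps hpi = g C hC hcC p hp hps hpi) :
    ∃ m : ∀ p : A, star p = p → p * p = p → L,
      (∀ C hC hc (p : A) (hp : p ∈ C) (hps : star p = p) (hpi : p * p = p),
        m p hps hpi = g C hC hc p hp hps hpi) ∧
      (∀ m' : ∀ p : A, star p = p → p * p = p → L,
        (∀ C hC hc (p : A) (hp : p ∈ C) (hps : star p = p) (hpi : p * p = p),
          m' p hps hpi = g C hC hc p hp hps hpi) → m' = m) ∧
      (∀ hs hi, m 0 hs hi = ⊥) ∧
      (∀ hs hi, m 1 hs hi = ⊤) ∧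
      (∀ (p : A) (hps : star p = p) (hpi : p * p = p) hs' hi',
        m (1 - p) hs' hi' = (m p hps hpi)ᶜ) ∧
      (∀ (p q : A) (hps : star p = p) (hpi : p * p = p)
        (hqs : star q = q) (hqi : q * q = q), p * q = q * p →
        (∀ hs hi, m (p * q) hs hi = m p hps hpi ⊓ m q hqs hqi) ∧
        (∀ hs hi, m (p + q - p * q) hs hi = m p hps hpi ⊔ m q hqs hqi)) :=
  projections_colimit_general g g_bot g_top g_compl g_inf g_sup g_compat
end
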